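/- Let f : ℝ^d → ℝ be L-smooth, let μ > 0, and let f_μ be its uniform smoothing over the unit ball. Then for all x, x̂ ∈ ℝ^d (x̂ being a delayed iterate), ‖∇f_μ(x̂) − ∇f(x)‖² ≤ μ² L² d² / 2 + 2 L² ‖x̂ − x‖². -/

import Mathlib

open MeasureTheory ProbabilityTheory

/-- The uniform distribution on the closed unit ball of `ℝ^d`. -/
noncomputable def uniformBall (d : ℕ) : Measure (EuclideanSpace ℝ (Fin d)) :=
  (volume (Metric.closedBall (0 : EuclideanSpace ℝ (Fin d)) 1))⁻¹ •
    volume.restrict (Metric.closedBall (0 : EuclideanSpace ℝ (Fin d)) 1)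

/-- The uniform distribution on the unit sphere of `ℝ^d`, viewed as a measure on `ℝ^d`. -/
noncomputable def uniformSphere (d : ℕ) : Measure (EuclideanSpace ℝ (Fin d)) :=
  ((volume : Measure (EuclideanSpace ℝ (Fin d))).toSphere Set.univ)⁻¹ •
    Measure.map Subtype.val (volume : Measure (EuclideanSpace ℝ (Fin d))).toSphere

lemma ub_prob (d : ℕ) : IsProbabilityMeasure (uniformBall d) := by
  constructor
  have h0 : volume (Metric.closedBall (0 : EuclideanSpace ℝ (Fin d)) 1) ≠ 0 :=
    (Metric.measure_closedBall_pos _ _ one_pos).ne'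
  have h1 : volume (Metric.closedBall (0 : EuclideanSpace ℝ (Fin d)) 1) ≠ ⊤ :=
    measure_closedBall_lt_top.ne
  simp only [uniformBall, Measure.smul_apply, Measure.restrict_apply_univ, smul_eq_mul]
  exact ENNReal.inv_mul_cancel h0 h1

lemma ub_ae (d : ℕ) : ∀ᵐ v ∂(uniformBall d), ‖v‖ ≤ 1 := by
  have h : ∀ᵐ v ∂(volume.restrict (Metric.closedBall (0 : EuclideanSpace ℝ (Fin d)) 1)),
      ‖v‖ ≤ 1 := by
    filter_upwards [ae_restrict_mem measurableSet_closedBall] with v hv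
    simpa using hv
  exact Measure.ae_smul_measure h _

lemma ub_int (d : ℕ) {F : Type*} [NormedAddCommGroup F]
    (g : EuclideanSpace ℝ (Fin d) → F) (hg : Continuous g) :
    Integrable g (uniformBall d) := by
  refine Integrable.smul_measure ?_ ?_
  · exact hg.continuousOn.integrableOn_compact (isCompact_closedBall _ _)
  · exact ENNReal.inv_ne_top.2 (Metric.measure_closedBall_pos _ _ one_pos).ne'

lemma ub_one : ∫ v, ‖v‖ ∂(uniformBall 1) = 1 / 2 := by
  have h0 : (volume : Measure (EuclideanSpace ℝ (Fin 1))).real (Metric.ball 0 1) ≠ 0 :=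
    (ENNReal.toReal_pos (Metric.measure_ball_pos _ _ one_pos).ne' measure_ball_lt_top.ne).ne'
  have key := integral_fun_norm_addHaar (volume : Measure (EuclideanSpace ℝ (Fin 1)))
    (Set.indicator (Set.Iic (1:ℝ)) (fun y => y))
  have e1 : (fun v : EuclideanSpace ℝ (Fin 1) => Set.indicator (Set.Iic (1:ℝ)) (fun y => y) ‖v‖)
      = Set.indicator (Metric.closedBall 0 1) (fun v => ‖v‖) := by
    ext v
    simp [Set.indicator]
  have e2 : ∫ y in Set.Ioi (0:ℝ), y ^ 0 • Set.indicator (Set.Iic (1:ℝ)) (fun y => y) y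
      = 1 / 2 := by
    simp only [pow_zero, one_smul]
    rw [setIntegral_indicator measurableSet_Iic, Set.Ioi_inter_Iic,
      ← intervalIntegral.integral_of_le zero_le_one]
    norm_num
  rw [e1, integral_indicator measurableSet_closedBall] at key
  simp only [finrank_euclideanSpace, Fintype.card_fin, Nat.sub_self] at key
  rw [e2] at key
  rw [uniformBall, integral_smul_measure, key, Measure.addHaar_closedBall_eq_addHaar_ball]
  simp only [ENNReal.toReal_inv, Measure.real, smul_eq_mul, one_smul] at h0 ⊢
  field_simp

lemma ub_le (d : ℕ) (hd : d ≠ 0) : ∫ v, ‖v‖ ∂(uniformBall d) ≤ d / 2 := by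
  have := ub_prob d
  obtain rfl | h2 : d = 1 ∨ 2 ≤ d := by omega
  · rw [ub_one]; norm_num
  · have h : ∫ v, ‖v‖ ∂(uniformBall d) ≤ ∫ v, (1:ℝ) ∂(uniformBall d) :=
      integral_mono_ae (ub_int d _ continuous_norm) (integrable_const _) (ub_ae d)
    have h2' : (2:ℝ) ≤ d := by exact_mod_cast h2
    simp at h
    linarith

/-- Delayed-iterate bound for uniform smoothing:
`‖∇f_μ(x̂) − ∇f(x)‖² ≤ μ² L² d² / 2 + 2 L² ‖x̂ − x‖²`. -/
theorem uniform_smoothing_delayed_gradient_bound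
    (d : ℕ) (L μ : ℝ) (hμ : 0 < μ)
    (f : EuclideanSpace ℝ (Fin d) → ℝ)
    (hdiff : Differentiable ℝ f)
    (hlip : ∀ x y, ‖gradient f x - gradient f y‖ ≤ L * ‖x - y‖)
    (fμ : EuclideanSpace ℝ (Fin d) → ℝ)
    (hfμ : ∀ x, fμ x = ∫ v, f (x + μ • v) ∂(uniformBall d))
    (x xhat : EuclideanSpace ℝ (Fin d)) :
    ‖gradient fμ xhat - gradient f x‖ ^ 2
      ≤ μ ^ 2 * L ^ 2 * (d : ℝ) ^ 2 / 2 + 2 * L ^ 2 * ‖xhat - x‖ ^ 2 := by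
  have := ub_prob d
  rcases eq_or_ne d 0 with rfl | hd
  · have : gradient fμ xhat - gradient f x = 0 := Subsingleton.elim _ _
    rw [this]
    rw [norm_zero, zero_pow two_ne_zero]
    positivity
  have : NeZero d := ⟨hd⟩
  have hL : 0 ≤ L := by
    have h := hlip (EuclideanSpace.single 0 1) 0
    simp only [sub_zero, EuclideanSpace.norm_single, norm_one, mul_one] at h
    exact (norm_nonneg _).trans h
  have hgn : ∀ (g h : EuclideanSpace ℝ (Fin d) → ℝ) a b,
      ‖gradient g a - gradient h b‖ = ‖fderiv ℝ g a - fderiv ℝ h b‖ := by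
    intro g h a b
    simp only [gradient]
    rw [← map_sub, LinearIsometryEquiv.norm_map]
  have hl : ∀ a b, ‖fderiv ℝ f a - fderiv ℝ f b‖ ≤ L * ‖a - b‖ := by
    intro a b; rw [← hgn]; exact hlip a b
  have hc : Continuous (fderiv ℝ f) := by
    refine (LipschitzWith.of_dist_le_mul (K := ⟨L, hL⟩) ?_).continuous
    intro a b
    rw [dist_eq_norm, dist_eq_norm]
    exact hl a b
  have hcf : Continuous f := hdiff.continuous
  have hD : HasFDerivAt fμ (∫ v, fderiv ℝ f (xhat + μ • v) ∂(uniformBall d)) xhat := by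
    have hfe : fμ = fun x => ∫ v, f (x + μ • v) ∂(uniformBall d) := funext hfμ
    rw [hfe]
    refine hasFDerivAt_integral_of_dominated_of_fderiv_le
      (F := fun x v => f (x + μ • v)) (F' := fun x v => fderiv ℝ f (x + μ • v))
      (bound := fun _ => ‖fderiv ℝ f xhat‖ + L * (1 + μ))
      (Metric.ball_mem_nhds xhat one_pos) ?_ ?_ ?_ ?_ ?_ ?_
    · exact Filter.Eventually.of_forall fun a =>
        (ub_int d _ (by fun_prop)).aestronglyMeasurable
    · exact ub_int d _ (by fun_prop)
    · exact (ub_int d _ (by fun_prop)).aestronglyMeasurable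
    · filter_upwards [ub_ae d] with v hv a ha
      have h1 := hl (a + μ • v) xhat
      have h2 : ‖a + μ • v - xhat‖ ≤ 1 + μ := by
        have : a + μ • v - xhat = (a - xhat) + μ • v := by abel
        rw [this]
        refine (norm_add_le _ _).trans (add_le_add ?_ ?_)
        · rw [← dist_eq_norm]; exact (Metric.mem_ball.1 ha).le
        · rw [norm_smul, Real.norm_of_nonneg hμ.le]
          nlinarith
      have h3 := norm_le_norm_add_norm_sub' (fderiv ℝ f (a + μ • v)) (fderiv ℝ f xhat)
      have h4 := mul_le_mul_of_nonneg_left h2 hL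
      linarith
    · exact integrable_const _
    · refine Filter.Eventually.of_forall fun v a _ => ?_
      have h := (hdiff (a + μ • v)).hasFDerivAt.comp a ((hasFDerivAt_id a).add_const (μ • v))
      simpa [Function.comp_def] using h
  have hA : ‖gradient fμ xhat - gradient f xhat‖ ≤ L * μ * (d / 2) := by
    rw [hgn, hD.fderiv]
    have hi : Integrable (fun v => fderiv ℝ f (xhat + μ • v)) (uniformBall d) :=
      ub_int d _ (by fun_prop)
    have e : (∫ v, fderiv ℝ f (xhat + μ • v) ∂(uniformBall d)) - fderiv ℝ f xhat
        = ∫ v, (fderiv ℝ f (xhat + μ • v) - fderiv ℝ f xhat) ∂(uniformBall d) := by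
      rw [integral_sub hi (integrable_const _)]
      simp
    rw [e]
    calc _ ≤ ∫ v, L * μ * ‖v‖ ∂(uniformBall d) := by
          refine norm_integral_le_of_norm_le (ub_int d _ (by fun_prop)) ?_
          refine Filter.Eventually.of_forall fun v => ?_
          have h := hl (xhat + μ • v) xhat
          rw [add_sub_cancel_left, norm_smul, Real.norm_of_nonneg hμ.le] at h
          linarith
      _ ≤ _ := by
          rw [integral_const_mul]
          exact mul_le_mul_of_nonneg_left (ub_le d hd) (by positivity)
  have hB := hlip xhat x
  have hT : ‖gradient fμ xhat - gradient f x‖ ≤ L * μ * (d / 2) + L * ‖xhat - x‖ := by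
    have := norm_sub_le_norm_sub_add_norm_sub (gradient fμ xhat) (gradient f xhat) (gradient f x)
    linarith
  have hS := pow_le_pow_left₀ (norm_nonneg _) hT 2
  nlinarith [sq_nonneg (L * μ * (d / 2) - L * ‖xhat - x‖)]
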